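/- The operators on W satisfy the mixed Cartan relations of U_q[gl(2/1)]: [E11, E23] = 0, [E22, E23] = E23, [E33, E23] = −E23, [E11, E32] = 0, [E22, E32] = −E32, [E33, E32] = E32, and moreover [E12, E32] = 0 and [E21, E23] = 0 as linear operators on W. -/

import Mathlib

noncomputable section

/-- The `q`-number `[x] = (q^x - q^(-x))/(q - q⁻¹)`. -/
def qn (q : ℝ) (x : ℤ) : ℝ := (q ^ x - q ^ (-x)) / (q - q⁻¹)

/-- The triple `(m12, m22, m32)` attached to the sector `k ∈ {0,1,2,3}`. -/
def trip (m13 m23 m33 : ℤ) : Fin 4 → ℤ × ℤ × ℤ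
  | 0 => (m13, m23, m33)
  | 1 => (m13, m23 - 1, m33 + 1)
  | 2 => (m13 - 1, m23, m33 + 1)
  | 3 => (m13 - 1, m23 - 1, m33 + 2)

def M12 (m13 m23 m33 : ℤ) (k : Fin 4) : ℤ := (trip m13 m23 m33 k).1
def M22 (m13 m23 m33 : ℤ) (k : Fin 4) : ℤ := (trip m13 m23 m33 k).2.1
def M32 (m13 m23 m33 : ℤ) (k : Fin 4) : ℤ := (trip m13 m23 m33 k).2.2

/-- `m11` is in the allowed range `m22 ≤ m11 ≤ m12` of the sector `k`. -/
def InR (m13 m23 m33 : ℤ) (k : Fin 4) (x : ℤ) : Prop :=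
  M22 m13 m23 m33 k ≤ x ∧ x ≤ M12 m13 m23 m33 k

instance (m13 m23 m33 : ℤ) (k : Fin 4) (x : ℤ) : Decidable (InR m13 m23 m33 k x) :=
  instDecidableAnd

/-- The index set of the basis `v(k, m11)` of `W`. -/
abbrev Idx (m13 m23 m33 : ℤ) : Type :=
  {p : Fin 4 × ℤ // InR m13 m23 m33 p.1 p.2}

/-- The module `W = W^q([m13,m23,m33])`, realized as the free complex vector
space on the basis `v(k, m11)`, `k ∈ {0,1,2,3}`, `m22 ≤ m11 ≤ m12`. -/
abbrev Wsp (m13 m23 m33 : ℤ) : Type := Idx m13 m23 m33 →₀ ℂ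

/-- The basis vector `v(k, m11)` (zero if `m11` is out of range). -/
def bv (m13 m23 m33 : ℤ) (k : Fin 4) (x : ℤ) : Wsp m13 m23 m33 :=
  if h : InR m13 m23 m33 k x then Finsupp.single ⟨(k, x), h⟩ 1 else 0

/-- The sector `V_k`, the span of the `v(k, ·)`. -/
def Vk (m13 m23 m33 : ℤ) (k : Fin 4) : Submodule ℂ (Wsp m13 m23 m33) :=
  Submodule.span ℂ (Set.range (bv m13 m23 m33 k))

/-- The Gel'fand--Zetlin realization of the induced `U_q[gl(2/1)]`-module
`W^q([m13,m23,m33])`: seven linear operators acting on the basis `v(k, m11)`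
by the stated formulas (terms with `m11` out of range being `0`). -/
structure GZ (q : ℝ) (m13 m23 m33 : ℤ) where
  E11 : Wsp m13 m23 m33 →ₗ[ℂ] Wsp m13 m23 m33
  E22 : Wsp m13 m23 m33 →ₗ[ℂ] Wsp m13 m23 m33
  E33 : Wsp m13 m23 m33 →ₗ[ℂ] Wsp m13 m23 m33
  E12 : Wsp m13 m23 m33 →ₗ[ℂ] Wsp m13 m23 m33
  E21 : Wsp m13 m23 m33 →ₗ[ℂ] Wsp m13 m23 m33
  E23 : Wsp m13 m23 m33 →ₗ[ℂ] Wsp m13 m23 m33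
  E32 : Wsp m13 m23 m33 →ₗ[ℂ] Wsp m13 m23 m33
  hE11 : ∀ (k : Fin 4) (x : ℤ), InR m13 m23 m33 k x →
    E11 (bv m13 m23 m33 k x) = (x : ℂ) • bv m13 m23 m33 k x
  hE22 : ∀ (k : Fin 4) (x : ℤ), InR m13 m23 m33 k x →
    E22 (bv m13 m23 m33 k x) =
      ((M12 m13 m23 m33 k + M22 m13 m23 m33 k - x : ℤ) : ℂ) • bv m13 m23 m33 k x
  hE33 : ∀ (k : Fin 4) (x : ℤ), InR m13 m23 m33 k x →
    E33 (bv m13 m23 m33 k x) = ((M32 m13 m23 m33 k : ℤ) : ℂ) • bv m13 m23 m33 k x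
  hE12 : ∀ (k : Fin 4) (x : ℤ), InR m13 m23 m33 k x →
    E12 (bv m13 m23 m33 k x) =
      ((Real.sqrt (qn q (M12 m13 m23 m33 k - x) * qn q (x - M22 m13 m23 m33 k + 1)) : ℝ) : ℂ) •
        bv m13 m23 m33 k (x + 1)
  hE21 : ∀ (k : Fin 4) (x : ℤ), InR m13 m23 m33 k x →
    E21 (bv m13 m23 m33 k x) =
      ((Real.sqrt (qn q (M12 m13 m23 m33 k - x + 1) * qn q (x - M22 m13 m23 m33 k)) : ℝ) : ℂ) •
        bv m13 m23 m33 k (x - 1)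
  hE23₀ : ∀ x : ℤ, InR m13 m23 m33 0 x → E23 (bv m13 m23 m33 0 x) = 0
  hE23₁ : ∀ x : ℤ, InR m13 m23 m33 1 x →
    E23 (bv m13 m23 m33 1 x) =
      ((Real.sqrt (qn q (x - m23 + 1) / qn q (m13 - m23 + 1)) * qn q (m23 + m33) : ℝ) : ℂ) •
        bv m13 m23 m33 0 x
  hE23₂ : ∀ x : ℤ, InR m13 m23 m33 2 x →
    E23 (bv m13 m23 m33 2 x) =
      ((Real.sqrt (qn q (m13 - x) / qn q (m13 - m23)) * qn q (m13 + m33 + 1) : ℝ) : ℂ) •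
        bv m13 m23 m33 0 x
  hE23₃ : ∀ x : ℤ, InR m13 m23 m33 3 x →
    E23 (bv m13 m23 m33 3 x) =
      ((q⁻¹ * Real.sqrt (qn q (m13 - x) / qn q (m13 - m23 + 1)) * qn q (m13 + m33 + 1) : ℝ) : ℂ) •
          bv m13 m23 m33 1 x
        - ((q⁻¹ * Real.sqrt (qn q (x - m23 + 1) * qn q (m13 - m23)) *
            (qn q (m23 + m33) / qn q (m13 - m23 + 1)) : ℝ) : ℂ) • bv m13 m23 m33 2 x
  hE32₀ : ∀ x : ℤ, InR m13 m23 m33 0 x →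
    E32 (bv m13 m23 m33 0 x) =
      ((Real.sqrt (qn q (x - m23 + 1) / qn q (m13 - m23 + 1)) : ℝ) : ℂ) • bv m13 m23 m33 1 x
        + ((Real.sqrt (qn q (m13 - x) * qn q (m13 - m23)) / qn q (m13 - m23 + 1) : ℝ) : ℂ) •
            bv m13 m23 m33 2 x
  hE32₁ : ∀ x : ℤ, InR m13 m23 m33 1 x →
    E32 (bv m13 m23 m33 1 x) =
      ((q * Real.sqrt (qn q (m13 - x) / qn q (m13 - m23 + 1)) : ℝ) : ℂ) • bv m13 m23 m33 3 x
  hE32₂ : ∀ x : ℤ, InR m13 m23 m33 2 x →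
    E32 (bv m13 m23 m33 2 x) =
      -(((q * Real.sqrt (qn q (x - m23 + 1) / qn q (m13 - m23)) : ℝ) : ℂ) • bv m13 m23 m33 3 x)
  hE32₃ : ∀ x : ℤ, InR m13 m23 m33 3 x → E32 (bv m13 m23 m33 3 x) = 0

/-!
Fix a sector `k` and read `x ↦ v(k, x)` as a string indexed by all integers, zero out of range. On
such strings each of `E11`, `E22`, `E33`, `E12`, `E21` acts by `E v(k, x) = c k x • v(k, σ x)`, with
`σ` equal to the identity or to a shift by `±1`. The odd operators move along the edges `k → l` of
the square `0 → 1 → 3`, `0 → 2 → 3`, along which either `m22` or `m12` drops by one: `E32` follows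
the edges and `E23` goes backwards. Up to a constant, an edge carries the factor `√[m11 - m22 + 1]`
or `√[m12 - m11]`, formed with the labels of its source `k`. Such a factor vanishes exactly where
the two ranges differ, so no boundary cases remain. Multiplying by it turns the string of one end of
the edge into a string on which `E` acts with the coefficients of the other end, up to an additive
constant `d`, and then the commutator of `E` with the odd operator `A` is `d A`.
-/

section Ladder

variable {ι K V : Type*} [CommRing K] [AddCommGroup V] [Module K V]
  {E A : V →ₗ[K] V} {σ : ι → ι} {c c' f : ι → K} {d : K} {v : ι → V}

/-- The families `v` of vectors along which `E` acts as a weighted shift, `E vᵢ = cᵢ v_{σ i}`. The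
case `σ = id` describes families of eigenvectors. -/
def ladder (E : V →ₗ[K] V) (σ : ι → ι) (c : ι → K) : Submodule K (ι → V) where
  carrier := {v | ∀ i, E (v i) = c i • v (σ i)}
  zero_mem' i := by simp
  add_mem' hv hw i := by simp [hv i, hw i]
  smul_mem' a v hv i := by simp [hv i, smul_comm a]

theorem mem_ladder : v ∈ ladder E σ c ↔ ∀ i, E (v i) = c i • v (σ i) := Iff.rfl

theorem smul_mem_ladder (hv : v ∈ ladder E σ c) (hf : ∀ i, f i * c i = c' i * f (σ i)) :
    (fun i => f i • v i) ∈ ladder E σ c' := by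
  intro i
  rw [map_smul, hv i, smul_smul, hf i, mul_smul]

theorem commutator_apply_of_mem_ladder (hv : v ∈ ladder E σ c)
    (hAv : A ∘ v ∈ ladder E σ fun i => c i + d) (i : ι) :
    (E ∘ₗ A - A ∘ₗ E) (v i) = d • A (v (σ i)) := by
  have hEA : E (A (v i)) = (c i + d) • A (v (σ i)) := hAv i
  rw [LinearMap.sub_apply, LinearMap.comp_apply, LinearMap.comp_apply, hEA, hv i, map_smul,
    add_smul, add_sub_cancel_left]

end Ladder

section QNumber

variable {q : ℝ} {a b : ℤ}

/-- The square root `√[n]` of a `q`-number, as a complex number. It is `0` when `[n] < 0`. -/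
def sqrtQn (q : ℝ) (n : ℤ) : ℂ := (√(qn q n) : ℝ)

theorem qn_zero (q : ℝ) : qn q 0 = 0 := by simp [qn]

theorem sqrtQn_zero (q : ℝ) : sqrtQn q 0 = 0 := by simp [sqrtQn, qn_zero]

theorem qn_nonneg (hq : 0 < q) (ha : 0 ≤ a) : 0 ≤ qn q a := by
  rcases le_total 1 q with h | h
  · exact div_nonneg (sub_nonneg.2 (zpow_le_zpow_right₀ h (by lia)))
      (sub_nonneg.2 ((inv_le_one_of_one_le₀ h).trans h))
  · exact div_nonneg_of_nonpos (sub_nonpos.2 (zpow_le_zpow_right_of_le_one₀ hq h (by lia)))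
      (sub_nonpos.2 (h.trans ((one_le_inv₀ hq).2 h)))

theorem ofReal_sqrt_qn_mul (hq : 0 < q) (ha : 0 ≤ a) (b : ℤ) :
    (√(qn q a * qn q b) : ℂ) = sqrtQn q a * sqrtQn q b := by
  rw [Real.sqrt_mul (qn_nonneg hq ha), Complex.ofReal_mul, sqrtQn, sqrtQn]

theorem ofReal_sqrt_qn_div (hq : 0 < q) (a : ℤ) (hb : 0 ≤ b) :
    (√(qn q a / qn q b) : ℂ) = sqrtQn q a / sqrtQn q b := by
  rw [Real.sqrt_div' _ (qn_nonneg hq hb), Complex.ofReal_div, sqrtQn, sqrtQn]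

end QNumber

section Sectors

variable {q : ℝ} {m13 m23 m33 : ℤ} {k l : Fin 4} {x : ℤ}

theorem bv_of_not_inR (h : ¬ InR m13 m23 m33 k x) : bv m13 m23 m33 k x = 0 := dif_neg h

theorem Wsp.hom_ext {A B : Wsp m13 m23 m33 →ₗ[ℂ] Wsp m13 m23 m33}
    (h : ∀ k x, A (bv m13 m23 m33 k x) = B (bv m13 m23 m33 k x)) : A = B := by
  refine Finsupp.lhom_ext' fun ⟨⟨k, x⟩, hx⟩ => LinearMap.ext_ring ?_
  simpa [bv, dif_pos hx] using h k x

theorem apply_bv_eq_of_inR {A : Wsp m13 m23 m33 →ₗ[ℂ] Wsp m13 m23 m33} {w : Wsp m13 m23 m33}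
    (h_in : InR m13 m23 m33 k x → A (bv m13 m23 m33 k x) = w)
    (h_out : ¬ InR m13 m23 m33 k x → w = 0) : A (bv m13 m23 m33 k x) = w := by
  by_cases h : InR m13 m23 m33 k x
  · exact h_in h
  · rw [bv_of_not_inR h, map_zero, h_out h]

theorem sqrtQn_smul_bv_eq_zero {n : ℤ} (h : InR m13 m23 m33 k x → n = 0) :
    sqrtQn q n • bv m13 m23 m33 k x = 0 := by
  by_cases hx : InR m13 m23 m33 k x
  · rw [h hx, sqrtQn_zero, zero_smul]
  · rw [bv_of_not_inR hx, smul_zero]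

/-- The number `√[m11 - m22 + 1]` for the labels of the sector `k`, which is the factor carried by
an edge `k → l` along which `m22` drops. -/
def lowerRoot (q : ℝ) (m13 m23 m33 : ℤ) (k : Fin 4) (x : ℤ) : ℂ :=
  sqrtQn q (x - M22 m13 m23 m33 k + 1)

/-- The number `√[m12 - m11]` for the labels of the sector `k`, which is the factor carried by an
edge `k → l` along which `m12` drops. -/
def upperRoot (q : ℝ) (m13 m23 m33 : ℤ) (k : Fin 4) (x : ℤ) : ℂ :=
  sqrtQn q (M12 m13 m23 m33 k - x)

/-- The edges `k → l` of the square of sectors along which `m22` drops by one, `0 → 1` and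
`2 → 3`. -/
structure LowersM22 (m13 m23 m33 : ℤ) (k l : Fin 4) : Prop where
  M12_eq : M12 m13 m23 m33 l = M12 m13 m23 m33 k
  M22_eq : M22 m13 m23 m33 l = M22 m13 m23 m33 k - 1
  M32_eq : M32 m13 m23 m33 l = M32 m13 m23 m33 k + 1

/-- The edges `k → l` of the square of sectors along which `m12` drops by one, `0 → 2` and
`1 → 3`. -/
structure LowersM12 (m13 m23 m33 : ℤ) (k l : Fin 4) : Prop where
  M12_eq : M12 m13 m23 m33 l = M12 m13 m23 m33 k - 1
  M22_eq : M22 m13 m23 m33 l = M22 m13 m23 m33 k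
  M32_eq : M32 m13 m23 m33 l = M32 m13 m23 m33 k + 1

theorem lowersM22_zero_one : LowersM22 m13 m23 m33 0 1 := ⟨rfl, rfl, rfl⟩

theorem lowersM22_two_three : LowersM22 m13 m23 m33 2 3 := ⟨rfl, rfl, (add_assoc m33 1 1).symm⟩

theorem lowersM12_zero_two : LowersM12 m13 m23 m33 0 2 := ⟨rfl, rfl, rfl⟩

theorem lowersM12_one_three : LowersM12 m13 m23 m33 1 3 := ⟨rfl, rfl, (add_assoc m33 1 1).symm⟩

namespace LowersM22

theorem lowerRoot_eq (h : LowersM22 m13 m23 m33 k l) (x : ℤ) :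
    lowerRoot q m13 m23 m33 l x = lowerRoot q m13 m23 m33 k (x + 1) := by
  rw [lowerRoot, lowerRoot, h.M22_eq]
  congr 1
  ring

theorem upperRoot_eq (h : LowersM22 m13 m23 m33 k l) (x : ℤ) :
    upperRoot q m13 m23 m33 l x = upperRoot q m13 m23 m33 k x := by
  rw [upperRoot, upperRoot, h.M12_eq]

theorem lowerRoot_smul_bv_target_eq_zero (h : LowersM22 m13 m23 m33 k l)
    (hx : ¬ InR m13 m23 m33 k x) : lowerRoot q m13 m23 m33 k x • bv m13 m23 m33 l x = 0 :=
  sqrtQn_smul_bv_eq_zero fun hl => by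
    rw [InR, h.M12_eq, h.M22_eq] at hl
    rw [InR] at hx
    lia

theorem lowerRoot_smul_bv_source_eq_zero (h : LowersM22 m13 m23 m33 k l)
    (hx : ¬ InR m13 m23 m33 l x) : lowerRoot q m13 m23 m33 k x • bv m13 m23 m33 k x = 0 :=
  sqrtQn_smul_bv_eq_zero fun hk => by
    rw [InR, h.M12_eq, h.M22_eq] at hx
    rw [InR] at hk
    lia

end LowersM22

namespace LowersM12

theorem lowerRoot_eq (h : LowersM12 m13 m23 m33 k l) (x : ℤ) :
    lowerRoot q m13 m23 m33 l x = lowerRoot q m13 m23 m33 k x := by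
  rw [lowerRoot, lowerRoot, h.M22_eq]

theorem upperRoot_eq (h : LowersM12 m13 m23 m33 k l) (x : ℤ) :
    upperRoot q m13 m23 m33 l x = upperRoot q m13 m23 m33 k (x + 1) := by
  rw [upperRoot, upperRoot, h.M12_eq]
  congr 1
  ring

theorem upperRoot_smul_bv_target_eq_zero (h : LowersM12 m13 m23 m33 k l)
    (hx : ¬ InR m13 m23 m33 k x) : upperRoot q m13 m23 m33 k x • bv m13 m23 m33 l x = 0 :=
  sqrtQn_smul_bv_eq_zero fun hl => by
    rw [InR, h.M12_eq, h.M22_eq] at hl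
    rw [InR] at hx
    lia

theorem upperRoot_smul_bv_source_eq_zero (h : LowersM12 m13 m23 m33 k l)
    (hx : ¬ InR m13 m23 m33 l x) : upperRoot q m13 m23 m33 k x • bv m13 m23 m33 k x = 0 :=
  sqrtQn_smul_bv_eq_zero fun hk => by
    rw [InR, h.M12_eq, h.M22_eq] at hx
    rw [InR] at hk
    lia

end LowersM12

end Sectors

namespace GZ

variable {q : ℝ} {m13 m23 m33 : ℤ} (R : GZ q m13 m23 m33)

section EvenOperators

theorem E11_bv (k : Fin 4) (x : ℤ) :
    R.E11 (bv m13 m23 m33 k x) = (x : ℂ) • bv m13 m23 m33 k x :=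
  apply_bv_eq_of_inR (R.hE11 k x) fun h => by rw [bv_of_not_inR h, smul_zero]

theorem E22_bv (k : Fin 4) (x : ℤ) :
    R.E22 (bv m13 m23 m33 k x) =
      ((M12 m13 m23 m33 k + M22 m13 m23 m33 k - x : ℤ) : ℂ) • bv m13 m23 m33 k x :=
  apply_bv_eq_of_inR (R.hE22 k x) fun h => by rw [bv_of_not_inR h, smul_zero]

theorem E33_bv (k : Fin 4) (x : ℤ) :
    R.E33 (bv m13 m23 m33 k x) = (M32 m13 m23 m33 k : ℂ) • bv m13 m23 m33 k x :=
  apply_bv_eq_of_inR (R.hE33 k x) fun h => by rw [bv_of_not_inR h, smul_zero]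

theorem E12_bv (hq : 0 < q) (k : Fin 4) (x : ℤ) :
    R.E12 (bv m13 m23 m33 k x) =
      (upperRoot q m13 m23 m33 k x * lowerRoot q m13 m23 m33 k x) • bv m13 m23 m33 k (x + 1) := by
  refine apply_bv_eq_of_inR (fun h => ?_) fun h => ?_
  · rw [R.hE12 k x h, ofReal_sqrt_qn_mul hq (sub_nonneg.2 h.2), upperRoot, lowerRoot]
  · rw [mul_smul, lowerRoot, sqrtQn_smul_bv_eq_zero, smul_zero]
    rw [InR] at h ⊢
    lia

theorem E21_bv (hq : 0 < q) (k : Fin 4) (x : ℤ) :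
    R.E21 (bv m13 m23 m33 k x) =
      (upperRoot q m13 m23 m33 k (x - 1) * lowerRoot q m13 m23 m33 k (x - 1)) •
        bv m13 m23 m33 k (x - 1) := by
  have h_upper : M12 m13 m23 m33 k - (x - 1) = M12 m13 m23 m33 k - x + 1 := by ring
  have h_lower : x - 1 - M22 m13 m23 m33 k + 1 = x - M22 m13 m23 m33 k := by ring
  rw [upperRoot, lowerRoot, h_upper, h_lower]
  refine apply_bv_eq_of_inR (fun h => ?_) fun h => ?_
  · rw [R.hE21 k x h, ofReal_sqrt_qn_mul hq (by linarith [h.2])]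
  · rw [mul_comm, mul_smul, sqrtQn_smul_bv_eq_zero, smul_zero]
    rw [InR] at h ⊢
    lia

end EvenOperators

section OddOperators

theorem E23_bv_zero (x : ℤ) : R.E23 (bv m13 m23 m33 0 x) = 0 :=
  apply_bv_eq_of_inR (R.hE23₀ x) fun _ => rfl

theorem E23_bv_one (hq : 0 < q) (x : ℤ) :
    R.E23 (bv m13 m23 m33 1 x) =
      (qn q (m23 + m33) / sqrtQn q (m13 - m23 + 1)) •
        lowerRoot q m13 m23 m33 0 x • bv m13 m23 m33 0 x := by
  refine apply_bv_eq_of_inR (fun h => ?_) fun h => ?_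
  · have h_range : m23 - 1 ≤ x ∧ x ≤ m13 := h
    rw [R.hE23₁ x h, Complex.ofReal_mul, ofReal_sqrt_qn_div hq _ (by lia)]
    change _ = _ • sqrtQn q (x - m23 + 1) • _
    module
  · rw [lowersM22_zero_one.lowerRoot_smul_bv_source_eq_zero h, smul_zero]

theorem E23_bv_two (hq : 0 < q) (x : ℤ) :
    R.E23 (bv m13 m23 m33 2 x) =
      (qn q (m13 + m33 + 1) / sqrtQn q (m13 - m23)) •
        upperRoot q m13 m23 m33 0 x • bv m13 m23 m33 0 x := by
  refine apply_bv_eq_of_inR (fun h => ?_) fun h => ?_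
  · have h_range : m23 ≤ x ∧ x ≤ m13 - 1 := h
    rw [R.hE23₂ x h, Complex.ofReal_mul, ofReal_sqrt_qn_div hq _ (by lia)]
    change _ = _ • sqrtQn q (m13 - x) • _
    module
  · rw [lowersM12_zero_two.upperRoot_smul_bv_source_eq_zero h, smul_zero]

theorem E23_bv_three (hq : 0 < q) (x : ℤ) :
    R.E23 (bv m13 m23 m33 3 x) =
      ((q : ℂ)⁻¹ * qn q (m13 + m33 + 1) / sqrtQn q (m13 - m23 + 1)) •
          upperRoot q m13 m23 m33 1 x • bv m13 m23 m33 1 x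
        - ((q : ℂ)⁻¹ * sqrtQn q (m13 - m23) * qn q (m23 + m33) / qn q (m13 - m23 + 1)) •
          lowerRoot q m13 m23 m33 2 x • bv m13 m23 m33 2 x := by
  refine apply_bv_eq_of_inR (fun h => ?_) fun h => ?_
  · have h_range : m23 - 1 ≤ x ∧ x ≤ m13 - 1 := h
    rw [R.hE23₃ x h]
    simp only [Complex.ofReal_mul, Complex.ofReal_div, Complex.ofReal_inv]
    rw [ofReal_sqrt_qn_div hq _ (by lia), ofReal_sqrt_qn_mul hq (by lia)]
    change _ = _ • sqrtQn q (m13 - x) • _ - _ • sqrtQn q (x - m23 + 1) • _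
    module
  · rw [lowersM12_one_three.upperRoot_smul_bv_source_eq_zero h,
      lowersM22_two_three.lowerRoot_smul_bv_source_eq_zero h, smul_zero, smul_zero, sub_zero]

theorem E32_bv_zero (hq : 0 < q) (x : ℤ) :
    R.E32 (bv m13 m23 m33 0 x) =
      (sqrtQn q (m13 - m23 + 1))⁻¹ • lowerRoot q m13 m23 m33 0 x • bv m13 m23 m33 1 x
        + (sqrtQn q (m13 - m23) / qn q (m13 - m23 + 1)) •
          upperRoot q m13 m23 m33 0 x • bv m13 m23 m33 2 x := by
  refine apply_bv_eq_of_inR (fun h => ?_) fun h => ?_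
  · have h_range : m23 ≤ x ∧ x ≤ m13 := h
    rw [R.hE32₀ x h, Complex.ofReal_div, ofReal_sqrt_qn_div hq _ (by lia),
      ofReal_sqrt_qn_mul hq (by lia)]
    change _ = _ • sqrtQn q (x - m23 + 1) • _ + _ • sqrtQn q (m13 - x) • _
    module
  · rw [lowersM22_zero_one.lowerRoot_smul_bv_target_eq_zero h,
      lowersM12_zero_two.upperRoot_smul_bv_target_eq_zero h, smul_zero, smul_zero, add_zero]

theorem E32_bv_one (hq : 0 < q) (x : ℤ) :
    R.E32 (bv m13 m23 m33 1 x) =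
      (q / sqrtQn q (m13 - m23 + 1)) •
        upperRoot q m13 m23 m33 1 x • bv m13 m23 m33 3 x := by
  refine apply_bv_eq_of_inR (fun h => ?_) fun h => ?_
  · have h_range : m23 - 1 ≤ x ∧ x ≤ m13 := h
    rw [R.hE32₁ x h, Complex.ofReal_mul, ofReal_sqrt_qn_div hq _ (by lia)]
    change _ = _ • sqrtQn q (m13 - x) • _
    module
  · rw [lowersM12_one_three.upperRoot_smul_bv_target_eq_zero h, smul_zero]

theorem E32_bv_two (hq : 0 < q) (x : ℤ) :
    R.E32 (bv m13 m23 m33 2 x) =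
      (-q / sqrtQn q (m13 - m23)) •
        lowerRoot q m13 m23 m33 2 x • bv m13 m23 m33 3 x := by
  refine apply_bv_eq_of_inR (fun h => ?_) fun h => ?_
  · have h_range : m23 ≤ x ∧ x ≤ m13 - 1 := h
    rw [R.hE32₂ x h, Complex.ofReal_mul, ofReal_sqrt_qn_div hq _ (by lia)]
    change _ = _ • sqrtQn q (x - m23 + 1) • _
    module
  · rw [lowersM22_two_three.lowerRoot_smul_bv_target_eq_zero h, smul_zero]

theorem E32_bv_three (x : ℤ) : R.E32 (bv m13 m23 m33 3 x) = 0 :=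
  apply_bv_eq_of_inR (R.hE32₃ x) fun _ => rfl

end OddOperators

section Commutators

variable {E : Wsp m13 m23 m33 →ₗ[ℂ] Wsp m13 m23 m33} {σ : ℤ → ℤ} {c : Fin 4 → ℤ → ℂ} {d : ℂ}

theorem E23_comp_bv_mem_ladder (hq : 0 < q)
    (hE : ∀ k x, E (bv m13 m23 m33 k x) = c k x • bv m13 m23 m33 k (σ x))
    (hM22 : ∀ {k l}, LowersM22 m13 m23 m33 k l → ∀ x,
      lowerRoot q m13 m23 m33 k x * c k x = (c l x + d) * lowerRoot q m13 m23 m33 k (σ x))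
    (hM12 : ∀ {k l}, LowersM12 m13 m23 m33 k l → ∀ x,
      upperRoot q m13 m23 m33 k x * c k x = (c l x + d) * upperRoot q m13 m23 m33 k (σ x)) :
    ∀ k, R.E23 ∘ bv m13 m23 m33 k ∈ ladder E σ fun x => c k x + d
  | 0 => (funext R.E23_bv_zero : R.E23 ∘ _ = _) ▸ zero_mem _
  | 1 => (funext (R.E23_bv_one hq) : R.E23 ∘ _ = _) ▸
      Submodule.smul_mem _ _ (smul_mem_ladder (mem_ladder.2 (hE 0)) (hM22 lowersM22_zero_one))
  | 2 => (funext (R.E23_bv_two hq) : R.E23 ∘ _ = _) ▸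
      Submodule.smul_mem _ _ (smul_mem_ladder (mem_ladder.2 (hE 0)) (hM12 lowersM12_zero_two))
  | 3 => (funext (R.E23_bv_three hq) : R.E23 ∘ _ = _) ▸ sub_mem
      (Submodule.smul_mem _ _ (smul_mem_ladder (mem_ladder.2 (hE 1)) (hM12 lowersM12_one_three)))
      (Submodule.smul_mem _ _ (smul_mem_ladder (mem_ladder.2 (hE 2)) (hM22 lowersM22_two_three)))

theorem E32_comp_bv_mem_ladder (hq : 0 < q)
    (hE : ∀ k x, E (bv m13 m23 m33 k x) = c k x • bv m13 m23 m33 k (σ x))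
    (hM22 : ∀ {k l}, LowersM22 m13 m23 m33 k l → ∀ x,
      lowerRoot q m13 m23 m33 k x * c l x = (c k x + d) * lowerRoot q m13 m23 m33 k (σ x))
    (hM12 : ∀ {k l}, LowersM12 m13 m23 m33 k l → ∀ x,
      upperRoot q m13 m23 m33 k x * c l x = (c k x + d) * upperRoot q m13 m23 m33 k (σ x)) :
    ∀ k, R.E32 ∘ bv m13 m23 m33 k ∈ ladder E σ fun x => c k x + d
  | 0 => (funext (R.E32_bv_zero hq) : R.E32 ∘ _ = _) ▸ add_mem
      (Submodule.smul_mem _ _ (smul_mem_ladder (mem_ladder.2 (hE 1)) (hM22 lowersM22_zero_one)))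
      (Submodule.smul_mem _ _ (smul_mem_ladder (mem_ladder.2 (hE 2)) (hM12 lowersM12_zero_two)))
  | 1 => (funext (R.E32_bv_one hq) : R.E32 ∘ _ = _) ▸
      Submodule.smul_mem _ _ (smul_mem_ladder (mem_ladder.2 (hE 3)) (hM12 lowersM12_one_three))
  | 2 => (funext (R.E32_bv_two hq) : R.E32 ∘ _ = _) ▸
      Submodule.smul_mem _ _ (smul_mem_ladder (mem_ladder.2 (hE 3)) (hM22 lowersM22_two_three))
  | 3 => (funext R.E32_bv_three : R.E32 ∘ _ = _) ▸ zero_mem _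

theorem commutator_E23_of_diagonal (hq : 0 < q)
    (hE : ∀ k x, E (bv m13 m23 m33 k x) = c k x • bv m13 m23 m33 k x)
    (hM22 : ∀ {k l}, LowersM22 m13 m23 m33 k l → ∀ x, c k x = c l x + d)
    (hM12 : ∀ {k l}, LowersM12 m13 m23 m33 k l → ∀ x, c k x = c l x + d) :
    E ∘ₗ R.E23 - R.E23 ∘ₗ E = d • R.E23 :=
  Wsp.hom_ext fun k => commutator_apply_of_mem_ladder (σ := id) (mem_ladder.2 (hE k)) <|
    R.E23_comp_bv_mem_ladder hq hE (fun h x => by rw [hM22 h, mul_comm])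
      (fun h x => by rw [hM12 h, mul_comm]) k

theorem commutator_E32_of_diagonal (hq : 0 < q)
    (hE : ∀ k x, E (bv m13 m23 m33 k x) = c k x • bv m13 m23 m33 k x)
    (hM22 : ∀ {k l}, LowersM22 m13 m23 m33 k l → ∀ x, c l x = c k x + d)
    (hM12 : ∀ {k l}, LowersM12 m13 m23 m33 k l → ∀ x, c l x = c k x + d) :
    E ∘ₗ R.E32 - R.E32 ∘ₗ E = d • R.E32 :=
  Wsp.hom_ext fun k => commutator_apply_of_mem_ladder (σ := id) (mem_ladder.2 (hE k)) <|
    R.E32_comp_bv_mem_ladder hq hE (fun h x => by rw [hM22 h, mul_comm])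
      (fun h x => by rw [hM12 h, mul_comm]) k

theorem commutator_E11_E23 (hq : 0 < q) : R.E11 ∘ₗ R.E23 - R.E23 ∘ₗ R.E11 = 0 :=
  (R.commutator_E23_of_diagonal hq R.E11_bv (d := 0) (by simp) (by simp)).trans (zero_smul ℂ _)

theorem commutator_E22_E23 (hq : 0 < q) : R.E22 ∘ₗ R.E23 - R.E23 ∘ₗ R.E22 = R.E23 :=
  (R.commutator_E23_of_diagonal hq R.E22_bv (d := 1)
    (fun h x => by rw [h.M12_eq, h.M22_eq]; push_cast; ring)
    (fun h x => by rw [h.M12_eq, h.M22_eq]; push_cast; ring)).trans (one_smul ℂ _)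

theorem commutator_E33_E23 (hq : 0 < q) : R.E33 ∘ₗ R.E23 - R.E23 ∘ₗ R.E33 = -R.E23 :=
  (R.commutator_E23_of_diagonal hq R.E33_bv (d := -1)
    (fun h _ => by simp [h.M32_eq]) (fun h _ => by simp [h.M32_eq])).trans (neg_one_smul ℂ R.E23)

theorem commutator_E11_E32 (hq : 0 < q) : R.E11 ∘ₗ R.E32 - R.E32 ∘ₗ R.E11 = 0 :=
  (R.commutator_E32_of_diagonal hq R.E11_bv (d := 0) (by simp) (by simp)).trans (zero_smul ℂ _)

theorem commutator_E22_E32 (hq : 0 < q) : R.E22 ∘ₗ R.E32 - R.E32 ∘ₗ R.E22 = -R.E32 :=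
  (R.commutator_E32_of_diagonal hq R.E22_bv (d := -1)
    (fun h x => by rw [h.M12_eq, h.M22_eq]; push_cast; ring)
    (fun h x => by rw [h.M12_eq, h.M22_eq]; push_cast; ring)).trans (neg_one_smul ℂ R.E32)

theorem commutator_E33_E32 (hq : 0 < q) : R.E33 ∘ₗ R.E32 - R.E32 ∘ₗ R.E33 = R.E32 :=
  (R.commutator_E32_of_diagonal hq R.E33_bv (d := 1)
    (fun h _ => by simp [h.M32_eq]) (fun h _ => by simp [h.M32_eq])).trans (one_smul ℂ _)

theorem commutator_E12_E32 (hq : 0 < q) : R.E12 ∘ₗ R.E32 - R.E32 ∘ₗ R.E12 = 0 := by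
  refine Wsp.hom_ext fun k x => ?_
  have h_mem := R.E32_comp_bv_mem_ladder hq (R.E12_bv hq) (d := 0)
    (fun h x => by rw [h.lowerRoot_eq, h.upperRoot_eq]; ring)
    (fun h x => by rw [h.lowerRoot_eq, h.upperRoot_eq]; ring)
  simpa using commutator_apply_of_mem_ladder (mem_ladder.2 (R.E12_bv hq k)) (h_mem k) x

theorem commutator_E21_E23 (hq : 0 < q) : R.E21 ∘ₗ R.E23 - R.E23 ∘ₗ R.E21 = 0 := by
  refine Wsp.hom_ext fun k x => ?_
  have h_mem := R.E23_comp_bv_mem_ladder hq (R.E21_bv hq) (d := 0)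
    (fun h x => by rw [h.lowerRoot_eq, h.upperRoot_eq, sub_add_cancel]; ring)
    (fun h x => by rw [h.lowerRoot_eq, h.upperRoot_eq, sub_add_cancel]; ring)
  simpa using commutator_apply_of_mem_ladder (mem_ladder.2 (R.E21_bv hq k)) (h_mem k) x

end Commutators

end GZ

/-- The operators on `W` satisfy the mixed Cartan relations of
`U_q[gl(2/1)]`: `[E11,E23] = 0`, `[E22,E23] = E23`, `[E33,E23] = −E23`,
`[E11,E32] = 0`, `[E22,E32] = −E32`, `[E33,E32] = E32`, and moreover
`[E12,E32] = 0` and `[E21,E23] = 0` as linear operators on `W`. -/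
theorem stmt_5 (q : ℝ) (hq : 0 < q) (hq1 : q ≠ 1)
    (m13 m23 m33 : ℤ) (hm : m23 ≤ m13) (R : GZ q m13 m23 m33) :
    R.E11 ∘ₗ R.E23 - R.E23 ∘ₗ R.E11 = 0 ∧
    R.E22 ∘ₗ R.E23 - R.E23 ∘ₗ R.E22 = R.E23 ∧
    R.E33 ∘ₗ R.E23 - R.E23 ∘ₗ R.E33 = -R.E23 ∧
    R.E11 ∘ₗ R.E32 - R.E32 ∘ₗ R.E11 = 0 ∧
    R.E22 ∘ₗ R.E32 - R.E32 ∘ₗ R.E22 = -R.E32 ∧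
    R.E33 ∘ₗ R.E32 - R.E32 ∘ₗ R.E33 = R.E32 ∧
    R.E12 ∘ₗ R.E32 - R.E32 ∘ₗ R.E12 = 0 ∧
    R.E21 ∘ₗ R.E23 - R.E23 ∘ₗ R.E21 = 0 := by
  exact ⟨R.commutator_E11_E23 hq, R.commutator_E22_E23 hq, R.commutator_E33_E23 hq,
    R.commutator_E11_E32 hq, R.commutator_E22_E32 hq, R.commutator_E33_E32 hq,
    R.commutator_E12_E32 hq, R.commutator_E21_E23 hq⟩
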